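/- Let ρ be a density matrix on ℂ^d and, for i = 1,…,n, let {Π^{(i)}_α}_{α=1}^{k_i} be d×d self-adjoint projections with Π^{(i)}_α Π^{(i)}_β = 0 for α ≠ β and Σ_{α=1}^{k_i} Π^{(i)}_α = 1. Fix an index i with 1 ≤ i ≤ n−1 and suppose that [Π^{(i)}_β, Q^n_{i+1}(α)] = 0 for every β = 1,…,k_i and every multi-index α. Then the sum rule holds at slot i: Σ_{α_i=1}^{k_i} Prob_ω(α_1,…,α_i,…,α_n) = ω( H^{i−1}_1(α)^* Q^n_{i+1}(α) H^{i−1}_1(α) ), i.e. the sum over α_i equals the probability of the history with the i-th observation omitted, for all fixed values of α_1,…,α_{i−1},α_{i+1},…,α_n. -/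

import Mathlib

open scoped ComplexOrder

/-- The history operator `H^n_j(α) = Π^{(n-1)}_{α_{n-1}} ⋯ Π^{(j)}_{α_j}`
(0-based indexing), with `histOp n k P α n = 1`. -/
noncomputable def histOp {M : Type*} [Monoid M] (n : ℕ) (k : Fin n → ℕ)
    (P : (i : Fin n) → Fin (k i) → M) (α : (i : Fin n) → Fin (k i)) (j : ℕ) : M :=
  if h : j < n then histOp n k P α (j + 1) * P ⟨j, h⟩ (α ⟨j, h⟩) else 1
termination_by n - j
decreasing_by omega

/-- The lower part `H^{j}_1(α) = Π^{(j-1)}_{α_{j-1}} ⋯ Π^{(0)}_{α_0}` of a history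
(0-based indexing): the product over the slots `0, …, j−1`. -/
def lowHist {M : Type*} [Monoid M] (n : ℕ) (k : Fin n → ℕ)
    (P : (i : Fin n) → Fin (k i) → M) (α : (i : Fin n) → Fin (k i)) : ℕ → M
  | 0 => 1
  | (j + 1) => (if h : j < n then P ⟨j, h⟩ (α ⟨j, h⟩) else 1) * lowHist n k P α j

/-!
Factor the history around slot `i` as `H = h Π_β l`, where `h` and `l` collect the later and the
earlier projections and do not depend on `β`. Since `Π_β` commutes with `Q = h* h`,
`H* H = l* (Π_β Q Π_β) l = l* (Q Π_β) l`, which is linear rather than quadratic in `Π_β`; summing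
over `β` then removes the projection by `∑ Π_β = 1`.
-/

theorem star_mul_self_mul_of_isStarProjection {S : Type*} [Semigroup S] [StarMul S] {h p : S}
    (hp : IsStarProjection p) (hcomm : Commute p (star h * h)) :
    star (h * p) * (h * p) = star h * h * p :=
  calc star (h * p) * (h * p) = p * (star h * h) * p := by
        simp only [star_mul, hp.isSelfAdjoint.star_eq, mul_assoc]
    _ = star h * h * (p * p) := by rw [hcomm.eq, mul_assoc]
    _ = star h * h * p := by rw [hp.isIdempotentElem.eq]

theorem sum_star_mul_self_mul_mul_of_sum_eq_one {ι R : Type*} [Fintype ι] [Semiring R] [StarRing R]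
    {h : R} {p : ι → R} (hp : ∀ a, IsStarProjection (p a)) (hsum : ∑ a, p a = 1)
    (hcomm : ∀ a, Commute (p a) (star h * h)) (l : R) :
    ∑ a, star (h * p a * l) * (h * p a * l) = star l * (star h * h * l) :=
  calc ∑ a, star (h * p a * l) * (h * p a * l)
      = ∑ a, star l * (star (h * p a) * (h * p a)) * l := by
        simp only [star_mul, mul_assoc]
    _ = ∑ a, star l * (star h * h * p a) * l := by
        simp only [star_mul_self_mul_of_isStarProjection (hp _) (hcomm _)]
    _ = star l * (star h * h * ∑ a, p a) * l := by
        simp only [Finset.mul_sum, Finset.sum_mul]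
    _ = star l * (star h * h * l) := by rw [hsum, mul_one, mul_assoc]

section Histories

variable {M : Type*} [Monoid M] {n : ℕ} {k : Fin n → ℕ} (P : (i : Fin n) → Fin (k i) → M)

theorem histOp_of_lt (α : (i : Fin n) → Fin (k i)) {j : ℕ} (hj : j < n) :
    histOp n k P α j = histOp n k P α (j + 1) * P ⟨j, hj⟩ (α ⟨j, hj⟩) := by
  rw [histOp, dif_pos hj]

theorem histOp_of_le (α : (i : Fin n) → Fin (k i)) {j : ℕ} (hj : n ≤ j) :
    histOp n k P α j = 1 := by
  rw [histOp, dif_neg hj.not_gt]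

theorem lowHist_succ_of_lt (α : (i : Fin n) → Fin (k i)) {j : ℕ} (hj : j < n) :
    lowHist n k P α (j + 1) = P ⟨j, hj⟩ (α ⟨j, hj⟩) * lowHist n k P α j := by
  rw [lowHist, dif_pos hj]

theorem histOp_zero_eq_histOp_mul_lowHist (α : (i : Fin n) → Fin (k i)) {j : ℕ} (hj : j ≤ n) :
    histOp n k P α 0 = histOp n k P α j * lowHist n k P α j := by
  induction j with
  | zero => rw [lowHist, mul_one]
  | succ j ih => rw [ih (Nat.le_of_succ_le hj), histOp_of_lt P α hj, lowHist_succ_of_lt P α hj,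
      mul_assoc]

theorem histOp_congr {α α' : (i : Fin n) → Fin (k i)} {j : ℕ}
    (h : ∀ i : Fin n, j ≤ i → α i = α' i) : histOp n k P α j = histOp n k P α' j := by
  by_cases hj : j < n
  · rw [histOp_of_lt P α hj, histOp_of_lt P α' hj, h ⟨j, hj⟩ le_rfl,
      histOp_congr fun i hi => h i (Nat.le_of_succ_le hi)]
  · rw [histOp_of_le P α (not_lt.mp hj), histOp_of_le P α' (not_lt.mp hj)]
termination_by n - j

theorem lowHist_congr {α α' : (i : Fin n) → Fin (k i)} {j : ℕ}
    (h : ∀ i : Fin n, (i : ℕ) < j → α i = α' i) : lowHist n k P α j = lowHist n k P α' j := by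
  induction j with
  | zero => rfl
  | succ j ih =>
    have ih' := ih fun i hi => h i (Nat.lt_succ_of_lt hi)
    by_cases hj : j < n
    · rw [lowHist_succ_of_lt P α hj, lowHist_succ_of_lt P α' hj, h ⟨j, hj⟩ j.lt_succ_self, ih']
    · rw [lowHist, lowHist, dif_neg hj, dif_neg hj, ih']

theorem histOp_update_zero (α : (i : Fin n) → Fin (k i)) (i : Fin n) (β : Fin (k i)) :
    histOp n k P (Function.update α i β) 0 =
      histOp n k P α (i + 1) * P i β * lowHist n k P α i := by
  have hupper : histOp n k P (Function.update α i β) (i + 1) = histOp n k P α (i + 1) :=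
    histOp_congr P fun _ hj => Function.update_of_ne (Fin.ne_of_gt hj) β α
  have hlower : lowHist n k P (Function.update α i β) i = lowHist n k P α i :=
    lowHist_congr P fun _ hj => Function.update_of_ne (Fin.ne_of_lt hj) β α
  rw [histOp_zero_eq_histOp_mul_lowHist P _ i.isLt.le, histOp_of_lt P _ i.isLt, hupper, hlower,
    Fin.eta, Function.update_self]

end Histories

theorem history_sum_rule_general {R : Type*} [Semiring R] [StarRing R] {n : ℕ} {k : Fin n → ℕ}
    (P : (i : Fin n) → Fin (k i) → R) (α : (i : Fin n) → Fin (k i)) (i : Fin n)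
    (hP : ∀ β, IsStarProjection (P i β)) (hPsum : ∑ β, P i β = 1)
    (hcomm : ∀ β, Commute (P i β) (star (histOp n k P α (i + 1)) * histOp n k P α (i + 1))) :
    ∑ β, star (histOp n k P (Function.update α i β) 0) *
        histOp n k P (Function.update α i β) 0 =
      star (lowHist n k P α i) *
        ((star (histOp n k P α (i + 1)) * histOp n k P α (i + 1)) * lowHist n k P α i) := by
  simp only [histOp_update_zero]
  exact sum_star_mul_self_mul_mul_of_sum_eq_one hP hPsum hcomm _

/-- The sum rule for histories: if the projections `Π^{(i)}_β` at slot `i` commute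
with `Q^n_{i+1}(α) = H^n_{i+1}(α)* H^n_{i+1}(α)`, then summing the history
probabilities over the outcome at slot `i` yields the probability of the history
with the `i`-th observation omitted,
`ω(H^{i−1}_1(α)* Q^n_{i+1}(α) H^{i−1}_1(α))`. -/
theorem history_sum_rule {d : ℕ} (hd : 1 ≤ d)
    (ρ : Matrix (Fin d) (Fin d) ℂ) (hρ : ρ.PosSemidef) (htr : ρ.trace = 1)
    (n : ℕ) (k : Fin n → ℕ) (hk : ∀ i, 1 ≤ k i)
    (P : (i : Fin n) → Fin (k i) → Matrix (Fin d) (Fin d) ℂ)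
    (hPsa : ∀ i a, (P i a).IsHermitian)
    (hPorth : ∀ i a b, a ≠ b → P i a * P i b = 0)
    (hPidem : ∀ i a, P i a * P i a = P i a)
    (hPsum : ∀ i, ∑ a, P i a = 1)
    (i : ℕ) (hi : i + 1 < n)
    (hcomm : ∀ (β : Fin (k ⟨i, by omega⟩)) (α : (i : Fin n) → Fin (k i)),
       P ⟨i, by omega⟩ β * (star (histOp n k P α (i + 1)) * histOp n k P α (i + 1)) =
         (star (histOp n k P α (i + 1)) * histOp n k P α (i + 1)) * P ⟨i, by omega⟩ β) :
    ∀ α : (i : Fin n) → Fin (k i),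
      ∑ β : Fin (k ⟨i, by omega⟩),
          (ρ * (star (histOp n k P (Function.update α ⟨i, by omega⟩ β) 0) *
            histOp n k P (Function.update α ⟨i, by omega⟩ β) 0)).trace =
        (ρ * (star (lowHist n k P α i) *
          ((star (histOp n k P α (i + 1)) * histOp n k P α (i + 1)) *
            lowHist n k P α i))).trace := by
  intro α
  rw [← Matrix.trace_sum, ← Finset.mul_sum,
    history_sum_rule_general P α ⟨i, by omega⟩ (fun β => ⟨hPidem _ β, hPsa _ β⟩) (hPsum _)
      (hcomm · α)]
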